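/- Let k ∈ [0,1) and let x_l ≤ x_r < o < y_l ≤ y_r in [0,1] with 1 − y_r ≥ x_l. Let (a*, b*) = ((x_l+x_r)/2, (y_l−x_l)/2 + 1/2) be the optimal edge for maximum cost. Then the maximum cost of the edge (x_l, y_r) is at most 2·cost(a*,b*,x_r); that is, max over the four agents of their cost under (x_l, y_r) is at most twice the optimal maximum cost. -/

import Mathlib

/-!
Among the left agents the one farthest from `xl` is `xr`, and among the right agents the one
farthest from `yr` is `yl`, so these two determine the maximum cost of the edge `(xl, yr)`.
Passing from the optimal edge to `(xl, yr)` at most doubles each of the three parts (access, edge,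
egress) of the cost of either of them, and the optimal edge balances the two agents: it costs
`xr` exactly as much as `yl`.
-/

/-- The cost of the edge `(a, b)` to an agent at `x` on the left of the obstacle, who walks
to `a`, crosses the edge at price `k` per unit length, and walks from `b` to the right end `1`. -/
def leftCost (k a b x : ℝ) : ℝ :=
  |x - a| + k * (b - a) + (1 - b)

/-- The cost of the edge `(a, b)` to an agent at `y` on the right of the obstacle, who walks
to `b`, crosses the edge at price `k` per unit length, and walks from `a` to the left end `0`. -/
def rightCost (k a b y : ℝ) : ℝ :=
  |y - b| + k * (b - a) + a

/-- The maximum cost of the edge `(a, b)` over the left agents `xl`, `xr` and the right agents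
`yl`, `yr`. -/
def maxCost (k xl xr yl yr a b : ℝ) : ℝ :=
  max (max (leftCost k a b xl) (leftCost k a b xr))
    (max (rightCost k a b yl) (rightCost k a b yr))

/-- The left endpoint `a*` of the edge minimizing the maximum cost when `0 ≤ k < 1` and
`xl ≤ 1 - yr`. -/
noncomputable def optLeft (xl xr : ℝ) : ℝ :=
  (xl + xr) / 2

/-- The right endpoint `b*` of the edge minimizing the maximum cost when `0 ≤ k < 1` and
`xl ≤ 1 - yr`. -/
noncomputable def optRight (xl yl : ℝ) : ℝ :=
  (yl - xl) / 2 + 1 / 2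

section Cost

variable {k a b a' b' c x y : ℝ}

theorem monotoneOn_leftCost : MonotoneOn (leftCost k a b) (Set.Ici a) := by
  intro x hx x' hx' hxx'
  rw [Set.mem_Ici] at hx hx'
  simp only [leftCost, abs_of_nonneg (sub_nonneg.2 hx), abs_of_nonneg (sub_nonneg.2 hx')]
  gcongr

theorem antitoneOn_rightCost : AntitoneOn (rightCost k a b) (Set.Iic b) := by
  intro y hy y' hy' hyy'
  rw [Set.mem_Iic] at hy hy'
  simp only [rightCost, abs_of_nonpos (sub_nonpos.2 hy), abs_of_nonpos (sub_nonpos.2 hy')]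
  gcongr

theorem leftCost_le_mul_leftCost (hk : 0 ≤ k) (access : |x - a| ≤ c * |x - a'|)
    (edge : b - a ≤ c * (b' - a')) (egress : 1 - b ≤ c * (1 - b')) :
    leftCost k a b x ≤ c * leftCost k a' b' x :=
  calc |x - a| + k * (b - a) + (1 - b)
      ≤ c * |x - a'| + k * (c * (b' - a')) + c * (1 - b') := by gcongr
    _ = c * (|x - a'| + k * (b' - a') + (1 - b')) := by ring

theorem rightCost_le_mul_rightCost (hk : 0 ≤ k) (access : |y - b| ≤ c * |y - b'|)
    (edge : b - a ≤ c * (b' - a')) (egress : a ≤ c * a') :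
    rightCost k a b y ≤ c * rightCost k a' b' y :=
  calc |y - b| + k * (b - a) + a
      ≤ c * |y - b'| + k * (c * (b' - a')) + c * a' := by gcongr
    _ = c * (|y - b'| + k * (b' - a') + a') := by ring

end Cost

section OptimalEdge

variable {k xl xr yl yr : ℝ}

theorem maxCost_outerEdge (hx : xl ≤ xr) (hy : yl ≤ yr) :
    maxCost k xl xr yl yr xl yr = max (leftCost k xl yr xr) (rightCost k xl yr yl) := by
  have left : leftCost k xl yr xl ≤ leftCost k xl yr xr :=
    monotoneOn_leftCost Set.self_mem_Ici hx hx
  have right : rightCost k xl yr yr ≤ rightCost k xl yr yl :=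
    antitoneOn_rightCost hy Set.self_mem_Iic hy
  rw [maxCost, max_eq_right left, max_eq_left right]

theorem abs_sub_optLeft (hx : xl ≤ xr) : |xr - optLeft xl xr| = (xr - xl) / 2 := by
  rw [optLeft, abs_of_nonneg (by linarith)]
  ring

theorem abs_sub_optRight (h : xl ≤ 1 - yl) : |yl - optRight xl yl| = (1 - yl - xl) / 2 := by
  rw [optRight, abs_of_nonpos (by linarith)]
  ring

theorem leftCost_opt_eq_rightCost_opt (hx : xl ≤ xr) (h : xl ≤ 1 - yl) :
    leftCost k (optLeft xl xr) (optRight xl yl) xr =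
      rightCost k (optLeft xl xr) (optRight xl yl) yl := by
  rw [leftCost, rightCost, abs_sub_optLeft hx, abs_sub_optRight h, optLeft, optRight]
  ring

theorem sub_le_two_mul_optRight_sub_optLeft (hxy : xr ≤ yl) (h : xl ≤ 1 - yr) :
    yr - xl ≤ 2 * (optRight xl yl - optLeft xl xr) := by
  rw [optRight, optLeft]
  linarith

theorem leftCost_outerEdge_le_two_mul (hk : 0 ≤ k) (hxl : 0 ≤ xl) (hx : xl ≤ xr) (hxy : xr ≤ yl)
    (hy : yl ≤ yr) (h : xl ≤ 1 - yr) :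
    leftCost k xl yr xr ≤ 2 * leftCost k (optLeft xl xr) (optRight xl yl) xr := by
  refine leftCost_le_mul_leftCost hk ?access (sub_le_two_mul_optRight_sub_optLeft hxy h) ?egress
  case access =>
    rw [abs_sub_optLeft hx, abs_of_nonneg (sub_nonneg.2 hx)]
    linarith
  case egress =>
    rw [optRight]
    linarith

theorem rightCost_outerEdge_le_two_mul (hk : 0 ≤ k) (hxl : 0 ≤ xl) (hx : xl ≤ xr) (hxy : xr ≤ yl)
    (hy : yl ≤ yr) (h : xl ≤ 1 - yr) :
    rightCost k xl yr yl ≤ 2 * rightCost k (optLeft xl xr) (optRight xl yl) yl := by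
  refine rightCost_le_mul_rightCost hk ?access (sub_le_two_mul_optRight_sub_optLeft hxy h) ?egress
  case access =>
    rw [abs_sub_optRight (by linarith), abs_of_nonpos (sub_nonpos.2 hy)]
    linarith
  case egress =>
    rw [optLeft]
    linarith

theorem stmt_17_general (hk : 0 ≤ k) (hxl : 0 ≤ xl) (hx : xl ≤ xr) (hxy : xr ≤ yl)
    (hy : yl ≤ yr) (h : xl ≤ 1 - yr) :
    maxCost k xl xr yl yr xl yr ≤ 2 * leftCost k (optLeft xl xr) (optRight xl yl) xr := by
  have balanced : leftCost k (optLeft xl xr) (optRight xl yl) xr =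
      rightCost k (optLeft xl xr) (optRight xl yl) yl :=
    leftCost_opt_eq_rightCost_opt hx (by linarith)
  rw [maxCost_outerEdge hx hy]
  refine max_le (leftCost_outerEdge_le_two_mul hk hxl hx hxy hy h) ?_
  rw [balanced]
  exact rightCost_outerEdge_le_two_mul hk hxl hx hxy hy h

end OptimalEdge

/-- The maximum cost of the edge `(x_l, y_r)` is at most twice the optimal maximum cost
`cost(a*, b*, x_r)` where `(a*,b*) = ((x_l+x_r)/2, (y_l-x_l)/2 + 1/2)`. -/
theorem stmt_17 (k o xl xr yl yr : ℝ)
    (hk0 : 0 ≤ k) (hk1 : k < 1) (ho0 : 0 < o) (ho1 : o < 1)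
    (hxl0 : 0 ≤ xl) (hxlr : xl ≤ xr) (hxro : xr < o)
    (hoyl : o < yl) (hylr : yl ≤ yr) (hyr1 : yr ≤ 1)
    (hyx : 1 - yr ≥ xl) :
    max (max (|xl - xl| + k * (yr - xl) + (1 - yr)) (|xr - xl| + k * (yr - xl) + (1 - yr)))
        (max (|yl - yr| + k * (yr - xl) + xl) (|yr - yr| + k * (yr - xl) + xl))
      ≤ 2 * (|xr - (xl + xr) / 2| + k * (((yl - xl) / 2 + 1 / 2) - (xl + xr) / 2)
            + (1 - ((yl - xl) / 2 + 1 / 2))) :=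
  stmt_17_general hk0 hxl0 hxlr (hxro.trans hoyl).le hylr hyx
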